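/- Let X_1, X_2, ... be an infinite sequence of {0,1}-valued exchangeable random variables. Then the limit η = lim_{n→∞} (1/n) Σ_{i=1}^n X_i exists almost surely, takes values in [0,1], and conditionally on η the variables X_1, X_2, ... are i.i.d. Bernoulli(η); that is, for every positive integer n and all x_1, ..., x_n ∈ {0,1}, almost surely Pr(X_1 = x_1, ..., X_n = x_n | η) = η^s (1−η)^{n−s}, where s = x_1 + ... + x_n. -/

import Mathlib

open MeasureTheory Filter

/-!
The law of an exchangeable sequence on sequence space is invariant under transpositions of the
coordinates, and so is the upper limit `η` of the empirical means, exactly and not only almost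
surely. Hence in an integral `∫ V f(X_k)`, where `V` is a function of `η` and of
`X_0, …, X_{k-1}`, the index `k` may be replaced by any `l ≥ k`. Averaging over `l` replaces
`f(X_k)` by the limit of the empirical means of `f`, and peeling off the variables one after the
other computes the conditional expectation of `∏ f_i(X_i)` given `η`.

The empirical means converge because they are Cauchy in `L²` at rate `O(n^{-1/2})`: this gives
almost sure convergence along fourth powers, and nonnegativity fills the gaps.
-/

section DeFinetti

open scoped Topology ENNReal

/-! ### Cesàro means -/

/-- The mean `(u 0 + ⋯ + u (n - 1)) / n` of the first `n` terms of a real sequence, with value `0`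
for `n = 0`; for `u i = f (X i ω)` these are the empirical means of `f`. -/
noncomputable def cesaroMean (u : ℕ → ℝ) (n : ℕ) : ℝ :=
  (∑ i ∈ Finset.range n, u i) / n

lemma cesaroMean_nonneg {u : ℕ → ℝ} (hu : ∀ i, 0 ≤ u i) (n : ℕ) : 0 ≤ cesaroMean u n :=
  div_nonneg (Finset.sum_nonneg fun i _ => hu i) n.cast_nonneg

lemma abs_cesaroMean_le {u : ℕ → ℝ} {C : ℝ} (hu : ∀ i, |u i| ≤ C) (n : ℕ) :
    |cesaroMean u n| ≤ C := by
  rw [cesaroMean, abs_div, Nat.abs_cast]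
  refine div_le_of_le_mul₀ n.cast_nonneg ((abs_nonneg _).trans (hu 0)) ?_
  calc |∑ i ∈ Finset.range n, u i|
      ≤ ∑ i ∈ Finset.range n, |u i| := Finset.abs_sum_le_sum_abs _ _
    _ ≤ ∑ _i ∈ Finset.range n, C := Finset.sum_le_sum fun i _ => hu i
    _ = C * n := by simp [mul_comm]

lemma mem_Icc_of_tendsto_cesaroMean {u : ℕ → ℝ} {C t : ℝ} (hu : ∀ i, 0 ≤ u i)
    (huC : ∀ i, u i ≤ C) (h : Tendsto (cesaroMean u) atTop (𝓝 t)) : t ∈ Set.Icc 0 C :=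
  isClosed_Icc.mem_of_tendsto h <| .of_forall fun n =>
    ⟨cesaroMean_nonneg hu n, (le_abs_self _).trans <|
      abs_cesaroMean_le (fun i => (abs_of_nonneg (hu i)).trans_le (huC i)) n⟩

lemma cesaroMean_const_sub (c : ℝ) (u : ℕ → ℝ) {n : ℕ} (hn : n ≠ 0) :
    cesaroMean (fun i => c - u i) n = c - cesaroMean u n := by
  simp only [cesaroMean, Finset.sum_sub_distrib, Finset.sum_const, Finset.card_range, nsmul_eq_mul]
  field_simp

lemma tendsto_cesaroMean_const_sub (c : ℝ) {u : ℕ → ℝ} {l : ℝ}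
    (h : Tendsto (cesaroMean u) atTop (𝓝 l)) :
    Tendsto (cesaroMean fun i => c - u i) atTop (𝓝 (c - l)) :=
  (h.const_sub c).congr' <| (eventually_ne_atTop 0).mono fun _ hn =>
    (cesaroMean_const_sub c u hn).symm

lemma cesaroMean_comp_swap (u : ℕ → ℝ) {k l n : ℕ} (hk : k < n) (hl : l < n) :
    cesaroMean (u ∘ Equiv.swap k l) n = cesaroMean u n := by
  rw [cesaroMean, cesaroMean]
  congr 1
  refine Finset.sum_equiv (Equiv.swap k l) (fun i => ?_) fun i _ => rfl
  simp only [Finset.mem_range, Equiv.swap_apply_def]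
  split_ifs <;> omega

lemma measurable_cesaroMean {α : Type*} [MeasurableSpace α] {ξ : ℕ → α → ℝ}
    (hξ : ∀ i, Measurable (ξ i)) (n : ℕ) : Measurable fun a => cesaroMean (ξ · a) n :=
  (Finset.measurable_fun_sum _ fun i _ => hξ i).div_const _

lemma tendsto_cesaroMean_of_tendsto_pow {u : ℕ → ℝ} (hu : ∀ i, 0 ≤ u i) {d : ℕ} (hd : d ≠ 0)
    {l : ℝ} (h : Tendsto (fun k : ℕ => cesaroMean u ((k + 1) ^ d)) atTop (𝓝 l)) :
    Tendsto (cesaroMean u) atTop (𝓝 l) := by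
  refine tendsto_div_of_monotone_of_exists_subseq_tendsto_div
    (fun n => ∑ i ∈ Finset.range n, u i) l ?_ fun a ha => ⟨fun k => (k + 1) ^ d, ?_, ?_, h⟩
  · exact monotone_nat_of_le_succ fun n => by simpa [Finset.sum_range_succ] using hu n
  · have hratio : Tendsto (fun k : ℕ => (1 + 1 / ((k : ℝ) + 1)) ^ d) atTop (𝓝 1) := by
      simpa using (tendsto_one_div_add_atTop_nhds_zero_nat.const_add (1 : ℝ)).pow d
    filter_upwards [hratio.eventually_le_const ha] with k hk
    calc (((k + 1 + 1) ^ d : ℕ) : ℝ)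
        = (1 + 1 / ((k : ℝ) + 1)) ^ d * ((k + 1) ^ d : ℕ) := by
          push_cast
          rw [← mul_pow]
          congr 1
          field_simp
      _ ≤ a * ((k + 1) ^ d : ℕ) := by gcongr
  · exact tendsto_atTop_mono (fun k => k.le_succ.trans (Nat.le_self_pow hd _)) tendsto_id

/-! ### Square-integrable sequences with constant second moments -/

section EqualMoments

variable {Ω : Type*} [MeasurableSpace Ω] {μ : Measure Ω} {ξ : ℕ → Ω → ℝ} {a b : ℝ}

lemma memLp_cesaroMean {p : ℝ≥0∞} (hξ : ∀ i, MemLp (ξ i) p μ) (n : ℕ) :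
    MemLp (fun ω => cesaroMean (ξ · ω) n) p μ := by
  simpa only [cesaroMean, div_eq_inv_mul] using
    (memLp_finsetSum (Finset.range n) fun i _ => hξ i).const_mul (n : ℝ)⁻¹

lemma integral_cesaroMean_mul_cesaroMean (hξ : ∀ i, MemLp (ξ i) 2 μ)
    (hdiag : ∀ i, ∫ ω, ξ i ω * ξ i ω ∂μ = a)
    (hoff : ∀ i j, i ≠ j → ∫ ω, ξ i ω * ξ j ω ∂μ = b) {n m : ℕ} (hn : 0 < n) (hnm : n ≤ m) :
    ∫ ω, cesaroMean (ξ · ω) n * cesaroMean (ξ · ω) m ∂μ = b + (a - b) / m := by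
  have hint (i j : ℕ) : Integrable (fun ω => ξ i ω * ξ j ω) μ := (hξ i).integrable_mul (hξ j)
  have hmoment (i j : ℕ) : ∫ ω, ξ i ω * ξ j ω ∂μ = b + if i = j then a - b else 0 := by
    split_ifs with h
    · rw [h, hdiag, add_sub_cancel]
    · rw [hoff i j h, add_zero]
  have hrow (i : ℕ) (hi : i ∈ Finset.range n) :
      ∑ j ∈ Finset.range m, ∫ ω, ξ i ω * ξ j ω ∂μ = m * b + (a - b) := by
    have him : i < m := (Finset.mem_range.1 hi).trans_le hnm
    simp [hmoment, Finset.sum_add_distrib, him]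
  have hn' : (n : ℝ) ≠ 0 := by positivity
  have hm' : (m : ℝ) ≠ 0 := by exact_mod_cast (hn.trans_le hnm).ne'
  calc ∫ ω, cesaroMean (ξ · ω) n * cesaroMean (ξ · ω) m ∂μ
      = (∑ i ∈ Finset.range n, ∑ j ∈ Finset.range m, ∫ ω, ξ i ω * ξ j ω ∂μ) / (n * m) := by
        simp_rw [cesaroMean, div_mul_div_comm, Finset.sum_mul_sum]
        rw [integral_div,
          integral_finsetSum _ fun i _ => integrable_finsetSum _ fun j _ => hint i j]
        simp_rw [integral_finsetSum _ fun j _ => hint _ j]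
    _ = n * (m * b + (a - b)) / (n * m) := by
        rw [Finset.sum_congr rfl hrow, Finset.sum_const, Finset.card_range, nsmul_eq_mul]
    _ = b + (a - b) / m := by field_simp

lemma integral_sq_cesaroMean_sub (hξ : ∀ i, MemLp (ξ i) 2 μ)
    (hdiag : ∀ i, ∫ ω, ξ i ω * ξ i ω ∂μ = a)
    (hoff : ∀ i j, i ≠ j → ∫ ω, ξ i ω * ξ j ω ∂μ = b) {n m : ℕ} (hn : 0 < n) (hnm : n ≤ m) :
    ∫ ω, (cesaroMean (ξ · ω) n - cesaroMean (ξ · ω) m) ^ 2 ∂μ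
      = (a - b) * (1 / (n : ℝ) - 1 / m) := by
  have hint (n m : ℕ) : Integrable (fun ω => cesaroMean (ξ · ω) n * cesaroMean (ξ · ω) m) μ :=
    (memLp_cesaroMean hξ n).integrable_mul (memLp_cesaroMean hξ m)
  have hexpand (ω : Ω) : (cesaroMean (ξ · ω) n - cesaroMean (ξ · ω) m) ^ 2
      = cesaroMean (ξ · ω) n * cesaroMean (ξ · ω) n
        - 2 * (cesaroMean (ξ · ω) n * cesaroMean (ξ · ω) m)
        + cesaroMean (ξ · ω) m * cesaroMean (ξ · ω) m := by ring
  simp_rw [hexpand]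
  rw [integral_add (by fun_prop) (hint m m), integral_sub (hint n n) ((hint n m).const_mul 2),
    integral_const_mul,
    integral_cesaroMean_mul_cesaroMean hξ hdiag hoff hn le_rfl,
    integral_cesaroMean_mul_cesaroMean hξ hdiag hoff hn hnm,
    integral_cesaroMean_mul_cesaroMean hξ hdiag hoff (hn.trans_le hnm) le_rfl]
  ring

lemma integral_sq_cesaroMean_sub_le (hξ : ∀ i, MemLp (ξ i) 2 μ)
    (hdiag : ∀ i, ∫ ω, ξ i ω * ξ i ω ∂μ = a)
    (hoff : ∀ i j, i ≠ j → ∫ ω, ξ i ω * ξ j ω ∂μ = b)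
    {N n m : ℕ} (hN : 0 < N) (hn : N ≤ n) (hm : N ≤ m) :
    ∫ ω, (cesaroMean (ξ · ω) n - cesaroMean (ξ · ω) m) ^ 2 ∂μ ≤ |a - b| / N := by
  wlog hnm : n ≤ m generalizing n m
  · simpa only [sub_sq_comm] using this hm hn (not_le.1 hnm).le
  have hn0 : 0 < n := hN.trans_le hn
  have hle : 1 / (m : ℝ) ≤ 1 / n := by gcongr
  calc ∫ ω, (cesaroMean (ξ · ω) n - cesaroMean (ξ · ω) m) ^ 2 ∂μ
      = (a - b) * (1 / (n : ℝ) - 1 / m) := integral_sq_cesaroMean_sub hξ hdiag hoff hn0 hnm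
    _ ≤ |a - b| * (1 / (n : ℝ) - 1 / m) :=
        mul_le_mul_of_nonneg_right (le_abs_self _) (sub_nonneg.2 hle)
    _ ≤ |a - b| * (1 / N) := by
        gcongr
        exact (sub_le_self _ (by positivity)).trans (by gcongr)
    _ = |a - b| / N := mul_one_div _ _

lemma eLpNorm_two_eq_sqrt_integral_sq {f : Ω → ℝ} (hf : MemLp f 2 μ) :
    eLpNorm f 2 μ = ENNReal.ofReal √(∫ ω, f ω ^ 2 ∂μ) := by
  rw [hf.eLpNorm_eq_integral_rpow_norm two_ne_zero ENNReal.ofNat_ne_top, Real.sqrt_eq_rpow]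
  simp

theorem ae_exists_tendsto_cesaroMean_of_equal_moments (hξ : ∀ i, MemLp (ξ i) 2 μ)
    (hnonneg : ∀ i, 0 ≤ᵐ[μ] ξ i) (hdiag : ∀ i, ∫ ω, ξ i ω * ξ i ω ∂μ = a)
    (hoff : ∀ i j, i ≠ j → ∫ ω, ξ i ω * ξ j ω ∂μ = b) :
    ∀ᵐ ω ∂μ, ∃ l, Tendsto (cesaroMean (ξ · ω)) atTop (𝓝 l) := by
  let A (k : ℕ) (ω : Ω) : ℝ := cesaroMean (ξ · ω) ((k + 1) ^ 4)
  let B (k : ℕ) : ℝ := (√|a - b| + 1) * (1 / ((k + 1 : ℕ) : ℝ) ^ 2)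
  have hA (k : ℕ) : MemLp (A k) 2 μ := memLp_cesaroMean hξ _
  have hB : ∑' k, ENNReal.ofReal (B k) ≠ ∞ :=
    (((summable_nat_add_iff 1).2 (Real.summable_one_div_nat_pow.2 one_lt_two)).mul_left
      _).tsum_ofReal_ne_top
  have hcauchy (N n m : ℕ) (hn : N ≤ n) (hm : N ≤ m) :
      eLpNorm (A n - A m) 2 μ < ENNReal.ofReal (B N) := by
    rw [eLpNorm_two_eq_sqrt_integral_sq ((hA n).sub (hA m))]
    refine (ENNReal.ofReal_lt_ofReal_iff (by positivity)).2 ?_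
    have hpow {k : ℕ} (hk : N ≤ k) : (N + 1) ^ 4 ≤ (k + 1) ^ 4 := by gcongr
    calc √(∫ ω, (A n ω - A m ω) ^ 2 ∂μ)
        ≤ √(|a - b| / ((N + 1) ^ 4 : ℕ)) := Real.sqrt_le_sqrt <|
          integral_sq_cesaroMean_sub_le hξ hdiag hoff (by positivity) (hpow hn) (hpow hm)
      _ = √|a - b| * (1 / ((N + 1 : ℕ) : ℝ) ^ 2) := by
          rw [Real.sqrt_div (abs_nonneg _), div_eq_mul_one_div]
          congr 2
          rw [Real.sqrt_eq_iff_eq_sq (by positivity) (by positivity)]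
          push_cast
          ring
      _ < B N := by
          dsimp only [B]
          gcongr
          exact lt_add_one _
  filter_upwards [Lp.ae_tendsto_of_cauchy_eLpNorm (fun k => (hA k).1) one_le_two hB hcauchy,
    ae_all_iff.2 hnonneg] with ω ⟨l, hl⟩ hω
  exact ⟨l, tendsto_cesaroMean_of_tendsto_pow hω four_ne_zero hl⟩

end EqualMoments

/-! ### Exchangeable sequences -/

lemma abs_prod_le_prod {ι : Type*} (s : Finset ι) {u C : ι → ℝ} (h : ∀ i ∈ s, |u i| ≤ C i) :
    |∏ i ∈ s, u i| ≤ ∏ i ∈ s, C i := by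
  rw [Finset.abs_prod]
  exact Finset.prod_le_prod (fun _ _ => abs_nonneg _) h

variable {Ω E β : Type*} [MeasurableSpace Ω] [MeasurableSpace E] {μ : Measure Ω} {X : ℕ → Ω → E}

/-- Exchangeability of an infinite sequence: the joint law of each initial segment is invariant
under permutations of that segment. -/
def Exchangeable (X : ℕ → Ω → E) (μ : Measure Ω) : Prop :=
  ∀ (n : ℕ) (σ : Equiv.Perm (Fin n)),
    Measure.map (fun ω (i : Fin n) => X (σ i) ω) μ = Measure.map (fun ω (i : Fin n) => X i ω) μ

/-- Symmetric functions of a sequence, that is, those invariant under all permutations moving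
finitely many coordinates. Such permutations are products of transpositions, so only the latter
appear in the definition. -/
def IsSymmetric (F : (ℕ → E) → β) : Prop :=
  ∀ (k l : ℕ) (x : ℕ → E), F (x ∘ Equiv.swap k l) = F x

lemma condExp_comap_ae_eq [IsFiniteMeasure μ] [MeasurableSpace β] {Y : Ω → β} (hY : Measurable Y)
    {u : Ω → ℝ} (hu : Integrable u μ) {h : β → ℝ} (hh : Measurable h)
    (hhY : Integrable (fun ω => h (Y ω)) μ)
    (heq : ∀ B, MeasurableSet B →
      ∫ ω, B.indicator 1 (Y ω) * u ω ∂μ = ∫ ω, B.indicator 1 (Y ω) * h (Y ω) ∂μ) :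
    μ[u | MeasurableSpace.comap Y inferInstance] =ᵐ[μ] fun ω => h (Y ω) := by
  refine (ae_eq_condExp_of_forall_setIntegral_eq hY.comap_le hu (fun s _ _ => hhY.integrableOn) ?_
    (hh.comp (comap_measurable Y)).stronglyMeasurable.aestronglyMeasurable).symm
  rintro _ ⟨B, hB, rfl⟩ -
  have hpreimage (v : Ω → ℝ) : ∫ ω in Y ⁻¹' B, v ω ∂μ = ∫ ω, B.indicator 1 (Y ω) * v ω ∂μ := by
    rw [← integral_indicator (hY hB)]
    congr 1 with ω
    by_cases hω : Y ω ∈ B <;> simp [hω]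
  rw [hpreimage, hpreimage, heq B hB]

namespace Exchangeable

variable [IsFiniteMeasure μ]

lemma identDistrib_comp_swap (hX : Exchangeable X μ) (hXm : ∀ i, Measurable (X i)) (k l : ℕ) :
    ProbabilityTheory.IdentDistrib (fun ω => (X · ω) ∘ Equiv.swap k l) (fun ω => (X · ω)) μ μ := by
  have hpath : Measurable fun ω => (X · ω) := measurable_pi_lambda _ hXm
  have hswap : Measurable fun ω => (X · ω) ∘ Equiv.swap k l := measurable_pi_lambda _ fun i => hXm _
  refine (ProbabilityTheory.identDistrib_iff_forall_finset_identDistrib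
    (X := fun i => X (Equiv.swap k l i)) hswap.aemeasurable hpath.aemeasurable).2 fun I => ?_
  obtain ⟨n, hkn, hln, hIn⟩ : ∃ n, k < n ∧ l < n ∧ ∀ i ∈ I, i < n := by
    refine ⟨max (max k l) (I.sup id) + 1, by omega, by omega, fun i hi => ?_⟩
    have : i ≤ I.sup id := Finset.le_sup (f := id) hi
    omega
  let σ : Equiv.Perm (Fin n) := Equiv.swap ⟨k, hkn⟩ ⟨l, hln⟩
  have hσ (i : Fin n) : (σ i : ℕ) = Equiv.swap k l i := by
    simp only [σ, Equiv.swap_apply_def, Fin.ext_iff]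
    split_ifs <;> rfl
  have hinit : ProbabilityTheory.IdentDistrib (fun ω (i : Fin n) => X (σ i) ω)
      (fun ω (i : Fin n) => X i ω) μ μ :=
    ⟨(measurable_pi_lambda _ fun i => hXm _).aemeasurable,
      (measurable_pi_lambda _ fun i => hXm _).aemeasurable, hX n σ⟩
  have hproj : Measurable fun (x : Fin n → E) (i : I) => x ⟨i, hIn i i.2⟩ :=
    measurable_pi_lambda _ fun i => measurable_pi_apply _
  have hI := hinit.comp hproj
  simp only [Function.comp_def, hσ] at hI
  exact hI

lemma integral_comp_swap (hX : Exchangeable X μ)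
    (hXm : ∀ i, Measurable (X i)) {G : (ℕ → E) → ℝ} (hG : Measurable G) (k l : ℕ) :
    ∫ ω, G ((X · ω) ∘ Equiv.swap k l) ∂μ = ∫ ω, G (X · ω) ∂μ :=
  ((hX.identDistrib_comp_swap hXm k l).comp hG).integral_eq

lemma identDistrib_eval (hX : Exchangeable X μ) (hXm : ∀ i, Measurable (X i)) (i : ℕ) :
    ProbabilityTheory.IdentDistrib (X i) (X 0) μ μ := by
  simpa [Function.comp_def] using
    (hX.identDistrib_comp_swap hXm 0 i).comp (measurable_pi_apply 0)

lemma identDistrib_eval_pair (hX : Exchangeable X μ)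
    (hXm : ∀ i, Measurable (X i)) {i j : ℕ} (hij : i ≠ j) :
    ProbabilityTheory.IdentDistrib (fun ω => (X i ω, X j ω)) (fun ω => (X 0 ω, X 1 ω)) μ μ := by
  have hpair (k l : ℕ) : Measurable fun x : ℕ → E => (x k, x l) := by fun_prop
  obtain ⟨j', hj', hj⟩ : ∃ j', j' ≠ 0 ∧ Equiv.swap 0 i j' = j :=
    ⟨Equiv.swap 0 i j, by simpa [Equiv.swap_apply_eq_iff] using hij.symm,
      Equiv.swap_apply_self 0 i j⟩
  have hfirst := (hX.identDistrib_comp_swap hXm 0 i).comp (hpair 0 j')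
  have hsecond := (hX.identDistrib_comp_swap hXm 1 j').comp (hpair 0 1)
  simp only [Function.comp_def, Equiv.swap_apply_left, hj,
    Equiv.swap_apply_of_ne_of_ne zero_ne_one hj'.symm] at hfirst hsecond
  exact hfirst.trans hsecond

theorem ae_exists_tendsto_cesaroMean (hX : Exchangeable X μ)
    (hXm : ∀ i, Measurable (X i)) {f : E → ℝ} (hf : Measurable f) (hf0 : ∀ e, 0 ≤ f e)
    (hf2 : MemLp (fun ω => f (X 0 ω)) 2 μ) :
    ∀ᵐ ω ∂μ, ∃ l, Tendsto (cesaroMean fun i => f (X i ω)) atTop (𝓝 l) :=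
  ae_exists_tendsto_cesaroMean_of_equal_moments
    (fun i => ((hX.identDistrib_eval hXm i).comp hf).memLp_iff.2 hf2)
    (fun i => ae_of_all _ fun ω => hf0 (X i ω))
    (fun i => ((hX.identDistrib_eval hXm i).comp (hf.mul hf)).integral_eq)
    (fun _ _ hij => ((hX.identDistrib_eval_pair hXm hij).comp
      ((hf.comp measurable_fst).mul (hf.comp measurable_snd))).integral_eq)

lemma integral_mul_eval_eq (hX : Exchangeable X μ)
    (hXm : ∀ i, Measurable (X i)) {V : (ℕ → E) → ℝ} (hV : Measurable V) {k l : ℕ}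
    (hVkl : ∀ x, V (x ∘ Equiv.swap k l) = V x) {f : E → ℝ} (hf : Measurable f) :
    ∫ ω, V (X · ω) * f (X l ω) ∂μ = ∫ ω, V (X · ω) * f (X k ω) ∂μ := by
  simpa [hVkl] using
    hX.integral_comp_swap hXm (G := fun x => V x * f (x k)) (by fun_prop) k l

theorem integral_mul_eval_eq_integral_mul_limit (hX : Exchangeable X μ)
    (hXm : ∀ i, Measurable (X i)) {V : (ℕ → E) → ℝ} (hV : Measurable V)
    (hVint : Integrable (fun ω => V (X · ω)) μ) {k : ℕ}
    (hVk : ∀ l, k ≤ l → ∀ x, V (x ∘ Equiv.swap k l) = V x)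
    {f : E → ℝ} (hf : Measurable f) {C : ℝ} (hfC : ∀ e, |f e| ≤ C) {F : Ω → ℝ}
    (hF : ∀ᵐ ω ∂μ, Tendsto (cesaroMean fun i => f (X i ω)) atTop (𝓝 (F ω))) :
    ∫ ω, V (X · ω) * f (X k ω) ∂μ = ∫ ω, V (X · ω) * F ω ∂μ := by
  have hfX (i : ℕ) : Measurable fun ω => f (X i ω) := hf.comp (hXm i)
  have hmeans : Tendsto (cesaroMean fun l => ∫ ω, V (X · ω) * f (X l ω) ∂μ) atTop
      (𝓝 (∫ ω, V (X · ω) * f (X k ω) ∂μ)) := by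
    have hconst : Tendsto (fun l => ∫ ω, V (X · ω) * f (X l ω) ∂μ) atTop
        (𝓝 (∫ ω, V (X · ω) * f (X k ω) ∂μ)) :=
      tendsto_const_nhds.congr' <| (eventually_ge_atTop k).mono fun l hl =>
        (hX.integral_mul_eval_eq hXm hV (hVk l hl) hf).symm
    exact hconst.cesaro.congr fun n => inv_mul_eq_div _ _
  have hswap (n : ℕ) : ∫ ω, V (X · ω) * cesaroMean (fun i => f (X i ω)) n ∂μ
      = cesaroMean (fun l => ∫ ω, V (X · ω) * f (X l ω) ∂μ) n := by
    simp_rw [cesaroMean, mul_div_assoc', Finset.mul_sum]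
    rw [integral_div, integral_finsetSum _ fun l _ => hVint.mul_bdd (hfX l).aestronglyMeasurable
      (ae_of_all _ fun ω => hfC (X l ω))]
  have hlimit : Tendsto (fun n => ∫ ω, V (X · ω) * cesaroMean (fun i => f (X i ω)) n ∂μ) atTop
      (𝓝 (∫ ω, V (X · ω) * F ω ∂μ)) := by
    refine tendsto_integral_of_dominated_convergence (fun ω => |V (X · ω)| * C)
      (fun n => (hVint.1.mul (measurable_cesaroMean hfX n).aestronglyMeasurable))
      (hVint.abs.mul_const C) (fun n => ae_of_all _ fun ω => ?_) ?_
    · rw [norm_mul, Real.norm_eq_abs, Real.norm_eq_abs]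
      gcongr
      exact abs_cesaroMean_le (fun i => hfC (X i ω)) n
    · filter_upwards [hF] with ω hω using hω.const_mul _
  exact tendsto_nhds_unique hmeans (hlimit.congr hswap)

theorem integral_mul_prod_eq (hX : Exchangeable X μ)
    (hXm : ∀ i, Measurable (X i)) {n : ℕ} {f : Fin n → E → ℝ} (hf : ∀ i, Measurable (f i))
    (hfb : ∀ i, ∃ C, ∀ e, |f i e| ≤ C) {G : Fin n → (ℕ → E) → ℝ} (hG : ∀ i, Measurable (G i))
    (hGsymm : ∀ i, IsSymmetric (G i))
    (hlim : ∀ i, ∀ᵐ ω ∂μ, Tendsto (cesaroMean fun j => f i (X j ω)) atTop (𝓝 (G i (X · ω))))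
    {V : (ℕ → E) → ℝ} (hV : Measurable V) (hVsymm : IsSymmetric V)
    (hVint : Integrable (fun ω => V (X · ω)) μ) :
    ∫ ω, V (X · ω) * ∏ i, f i (X i ω) ∂μ = ∫ ω, V (X · ω) * ∏ i, G i (X · ω) ∂μ := by
  induction n generalizing V with
  | zero => simp
  | succ n ih =>
    choose C hC using hfb
    let U (x : ℕ → E) : ℝ := V x * ∏ i : Fin n, f i.castSucc (x i)
    have hpath : Measurable fun ω => (X · ω) := measurable_pi_lambda _ hXm
    have hU : Measurable U := by fun_prop
    have hUint : Integrable (fun ω => U (X · ω)) μ := by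
      have hprod : Measurable fun ω => ∏ i : Fin n, f i.castSucc (X i ω) :=
        Finset.measurable_fun_prod _ fun i _ => (hf i.castSucc).comp (hXm i)
      exact hVint.mul_bdd (c := ∏ i : Fin n, C i.castSucc) hprod.aestronglyMeasurable
        (ae_of_all _ fun ω => abs_prod_le_prod _ fun i _ => hC _ _)
    have hUn (l : ℕ) (hl : n ≤ l) (x : ℕ → E) : U (x ∘ Equiv.swap n l) = U x := by
      simp only [U, hVsymm n l x, Function.comp_apply]
      congr! 4 with i
      exact Equiv.swap_apply_of_ne_of_ne i.2.ne (i.2.trans_le hl).ne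
    have hVG : Integrable (fun ω => V (X · ω) * G (Fin.last n) (X · ω)) μ := by
      refine hVint.mul_bdd (c := C (Fin.last n)) ((hG _).comp hpath).aestronglyMeasurable ?_
      filter_upwards [hlim (Fin.last n)] with ω hω
      exact le_of_tendsto' hω.norm (abs_cesaroMean_le fun j => hC _ (X j ω))
    calc ∫ ω, V (X · ω) * ∏ i, f i (X i ω) ∂μ
        = ∫ ω, U (X · ω) * f (Fin.last n) (X n ω) ∂μ := by
          simp only [U, Fin.prod_univ_castSucc, Fin.val_castSucc, Fin.val_last, mul_assoc]
      _ = ∫ ω, U (X · ω) * G (Fin.last n) (X · ω) ∂μ :=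
          hX.integral_mul_eval_eq_integral_mul_limit hXm hU hUint hUn (hf _) (hC _) (hlim _)
      _ = ∫ ω, V (X · ω) * G (Fin.last n) (X · ω) * ∏ i : Fin n, f i.castSucc (X i ω) ∂μ := by
          simp only [U, mul_right_comm]
      _ = ∫ ω, V (X · ω) * G (Fin.last n) (X · ω) * ∏ i : Fin n, G i.castSucc (X · ω) ∂μ :=
          ih (fun i => hf _) (fun i => ⟨_, hC _⟩) (fun i => hG _) (fun i => hGsymm _)
            (fun i => hlim _) (hV.mul (hG _))
            (fun k l x => congrArg₂ (· * ·) (hVsymm k l x) (hGsymm _ k l x)) hVG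
      _ = ∫ ω, V (X · ω) * ∏ i, G i (X · ω) ∂μ := by
          simp only [Fin.prod_univ_castSucc, mul_assoc, mul_comm (G (Fin.last n) _)]

theorem condExp_prod_ae_eq [MeasurableSpace β] (hX : Exchangeable X μ)
    (hXm : ∀ i, Measurable (X i)) {T : (ℕ → E) → β} (hT : Measurable T) (hTsymm : IsSymmetric T)
    {n : ℕ} {f : Fin n → E → ℝ} (hf : ∀ i, Measurable (f i)) (hfb : ∀ i, ∃ C, ∀ e, |f i e| ≤ C)
    {g : Fin n → β → ℝ} (hg : ∀ i, Measurable (g i))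
    (hlim : ∀ i, ∀ᵐ ω ∂μ,
      Tendsto (cesaroMean fun j => f i (X j ω)) atTop (𝓝 (g i (T (X · ω))))) :
    μ[fun ω => ∏ i, f i (X i ω) | MeasurableSpace.comap (fun ω => T (X · ω)) inferInstance]
      =ᵐ[μ] fun ω => ∏ i, g i (T (X · ω)) := by
  have hpath : Measurable fun ω => (X · ω) := measurable_pi_lambda _ hXm
  have hTX : Measurable fun ω => T (X · ω) := hT.comp hpath
  choose C hC using hfb
  refine condExp_comap_ae_eq hTX (h := fun t => ∏ i, g i t) ?_
    (Finset.measurable_fun_prod _ fun i _ => hg i) ?_ fun B hB => ?_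
  · exact .of_bound
      (Finset.measurable_fun_prod _ fun i _ => (hf i).comp (hXm i)).aestronglyMeasurable (∏ i, C i)
      (ae_of_all _ fun ω => abs_prod_le_prod _ fun i _ => hC i _)
  · refine .of_bound
      (Finset.measurable_fun_prod _ fun i _ => (hg i).comp hTX).aestronglyMeasurable (∏ i, C i) ?_
    filter_upwards [ae_all_iff.2 hlim] with ω hω
    exact abs_prod_le_prod _ fun i _ =>
      le_of_tendsto' (hω i).norm (abs_cesaroMean_le fun j => hC i (X j ω))
  · exact hX.integral_mul_prod_eq hXm hf (fun i => ⟨_, hC i⟩) (fun i => (hg i).comp hT)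
      (fun i k l x => congrArg (g i) (hTsymm k l x)) hlim
      (V := fun x => B.indicator 1 (T x)) ((measurable_one.indicator hB).comp hT)
      (fun k l x => congrArg _ (hTsymm k l x))
      ((integrable_const (1 : ℝ)).indicator (hTX hB))

end Exchangeable

/-! ### The limiting frequency -/

/-- The upper limit of the empirical means of `f` along a sequence `x`. It is their limit as soon
as they converge; the upper limit makes the value independent of the order of any finitely many
terms for every `x`. -/
noncomputable def limsupMean (f : E → ℝ) (x : ℕ → E) : ℝ :=
  limsup (cesaroMean fun i => f (x i)) atTop

lemma measurable_limsupMean {f : E → ℝ} (hf : Measurable f) : Measurable (limsupMean f) :=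
  Measurable.limsup fun n => measurable_cesaroMean (fun i => hf.comp (measurable_pi_apply i)) n

lemma isSymmetric_limsupMean {α : Type*} (f : α → ℝ) : IsSymmetric (limsupMean f) := by
  intro k l x
  refine limsup_congr ?_
  filter_upwards [eventually_gt_atTop k, eventually_gt_atTop l] with n hk hl
  exact cesaroMean_comp_swap (fun i => f (x i)) hk hl

theorem Exchangeable.ae_tendsto_limsupMean [IsFiniteMeasure μ] (hX : Exchangeable X μ)
    (hXm : ∀ i, Measurable (X i)) {f : E → ℝ} (hf : Measurable f) (hf0 : ∀ e, 0 ≤ f e)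
    (hf2 : MemLp (fun ω => f (X 0 ω)) 2 μ) :
    ∀ᵐ ω ∂μ, Tendsto (cesaroMean fun i => f (X i ω)) atTop (𝓝 (limsupMean f (X · ω))) := by
  filter_upwards [hX.ae_exists_tendsto_cesaroMean hXm hf hf0 hf2] with ω ⟨l, hl⟩
  rwa [limsupMean, hl.limsup_eq]

lemma tendsto_cesaroMean_indicator_of_binary {u : ℕ → ℕ} (hu : ∀ i, u i = 0 ∨ u i = 1)
    {c : ℕ} (hc : c = 0 ∨ c = 1) {t : ℝ}
    (h : Tendsto (cesaroMean fun i => (u i : ℝ)) atTop (𝓝 t)) :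
    Tendsto (cesaroMean fun i => if u i = c then 1 else 0) atTop
      (𝓝 (t ^ c * (1 - t) ^ (1 - c))) := by
  rcases hc with rfl | rfl
  · have hcompl (i : ℕ) : (if u i = 0 then 1 else 0 : ℝ) = 1 - u i := by
      rcases hu i with h | h <;> simp [h]
    simpa [hcompl] using tendsto_cesaroMean_const_sub 1 h
  · have hself (i : ℕ) : (if u i = 1 then 1 else 0 : ℝ) = u i := by
      rcases hu i with h | h <;> simp [h]
    simpa [hself] using h

lemma indicator_forall_eq_prod {α ι : Type*} [Fintype ι] (p : ι → α → Prop)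
    [∀ i, DecidablePred (p i)] :
    {a | ∀ i, p i a}.indicator (fun _ => (1 : ℝ)) = fun a => ∏ i, if p i a then 1 else 0 := by
  ext a
  simp [Set.indicator_apply, Fintype.prod_boole]

lemma prod_pow_mul_one_sub_pow {n : ℕ} {x : Fin n → ℕ} (hx : ∀ i, x i ≤ 1) (t : ℝ) :
    ∏ i, t ^ x i * (1 - t) ^ (1 - x i) = t ^ (∑ i, x i) * (1 - t) ^ (n - ∑ i, x i) := by
  rw [Finset.prod_mul_distrib, Finset.prod_pow_eq_pow_sum, Finset.prod_pow_eq_pow_sum,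
    Finset.sum_tsub_distrib _ fun i _ => hx i]
  simp

end DeFinetti

/-- **de Finetti's Theorem, conditional independence form.** For an infinite exchangeable
sequence of `{0,1}`-valued random variables, the limiting relative frequency `η` of ones
exists almost surely, takes values in `[0,1]`, and conditionally on `η` the variables are
i.i.d. Bernoulli(`η`). -/
theorem deFinetti_conditional
    {Ω : Type*} [MeasurableSpace Ω] (ℙ : Measure Ω) [IsProbabilityMeasure ℙ]
    (X : ℕ → Ω → ℕ)
    (hmeas : ∀ i, Measurable (X i))
    (hbin : ∀ i ω, X i ω = 0 ∨ X i ω = 1)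
    (hexch : ∀ (n : ℕ) (σ : Equiv.Perm (Fin n)),
      Measure.map (fun ω (i : Fin n) => X (σ i) ω) ℙ
        = Measure.map (fun ω (i : Fin n) => X i ω) ℙ) :
    ∃ η : Ω → ℝ, Measurable η ∧
      (∀ᵐ ω ∂ℙ, Tendsto (fun n : ℕ => (∑ i ∈ Finset.range n, (X i ω : ℝ)) / n)
        atTop (nhds (η ω))) ∧
      (∀ᵐ ω ∂ℙ, η ω ∈ Set.Icc (0 : ℝ) 1) ∧
      ∀ (n : ℕ), 0 < n → ∀ x : Fin n → ℕ, (∀ i, x i = 0 ∨ x i = 1) →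
        ∀ᵐ ω ∂ℙ,
          (ℙ[Set.indicator {ω' | ∀ i : Fin n, X i ω' = x i} (fun _ => (1 : ℝ)) |
              MeasurableSpace.comap η inferInstance]) ω
            = η ω ^ (∑ i, x i) * (1 - η ω) ^ (n - ∑ i, x i) := by
  have hX : Exchangeable X ℙ := hexch
  let freq : (ℕ → ℕ) → ℝ := limsupMean (fun k => (k : ℝ))
  have hfreq : Measurable freq := measurable_limsupMean measurable_from_top
  have hle (i : ℕ) (ω : Ω) : (X i ω : ℝ) ≤ 1 := by rcases hbin i ω with h | h <;> simp [h]
  have hlim : ∀ᵐ ω ∂ℙ, Tendsto (cesaroMean fun i => (X i ω : ℝ)) atTop (nhds (freq (X · ω))) :=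
    hX.ae_tendsto_limsupMean hmeas measurable_from_top (fun k => k.cast_nonneg) <|
      .of_bound (measurable_from_top.comp (hmeas 0)).aestronglyMeasurable 1 <|
        ae_of_all _ fun ω => by simpa using hle 0 ω
  refine ⟨fun ω => freq (X · ω), hfreq.comp (measurable_pi_lambda _ hmeas), hlim,
    hlim.mono fun ω => mem_Icc_of_tendsto_cesaroMean (fun i => Nat.cast_nonneg _) (hle · ω),
    fun n _ x hx => ?_⟩
  have hcond := hX.condExp_prod_ae_eq hmeas hfreq (isSymmetric_limsupMean _) (n := n)
    (f := fun i k => if k = x i then 1 else 0) (g := fun i t => t ^ x i * (1 - t) ^ (1 - x i))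
    (fun i => measurable_from_top) (fun i => ⟨1, fun k => by split_ifs <;> simp⟩)
    (fun i => by fun_prop) fun i => hlim.mono fun ω hω =>
      tendsto_cesaroMean_indicator_of_binary (hbin · ω) (hx i) hω
  filter_upwards [hcond] with ω hω
  rw [indicator_forall_eq_prod, hω,
    prod_pow_mul_one_sub_pow fun i => by rcases hx i with h | h <;> omega]
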